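/- arXiv:2511.20064 — 3 statements merged into one kernel-verified Lean document; each statement's English description precedes it below -/
import Mathlib

section
/- For all integers m ≥ 1 and k ≥ 1 there exist constants C > 0 and κ > 0 such that for every integer ν ≥ 1, every open set Ω ⊆ ℝ^m, every bounded k-times continuously differentiable map u : Ω → ℝ^ν, every t > 0, every ρ > 0 and every x ∈ Ω with the open ball B_ρ(x) contained in Ω and (sup_{Ω}‖u‖)^k ≤ κ t^k ρ^k, one has (‖Du(x)‖ − t)_+ ≤ C ( M( ((sup_{Ω}‖u‖)^{k−1} ‖D^k u‖ − κ t^k)_+ )(x) )^{1/k}. -/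
open MeasureTheory Filter Topology ENNReal

/-- The maximal function of `f : Ω → [0,∞]`:
`(Mf)(x) = sup_{r>0} λ(B_r(x))⁻¹ ∫_{Ω ∩ B_r(x)} f`. -/
noncomputable def maximalFn {m : ℕ} (Ω : Set (EuclideanSpace ℝ (Fin m)))
    (f : EuclideanSpace ℝ (Fin m) → ℝ≥0∞) (x : EuclideanSpace ℝ (Fin m)) : ℝ≥0∞ :=
  ⨆ (r : ℝ) (_ : 0 < r),
    (volume (Metric.ball x r))⁻¹ * ∫⁻ y in Ω ∩ Metric.ball x r, f y

lemma aux_taylor_deriv {F : Type*} [NormedAddCommGroup F] [NormedSpace ℝ F]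
    (g : ℕ → ℝ → F) (b s : ℝ) (k : ℕ)
    (hg : ∀ j < k + 1, HasDerivAt (g j) (g (j+1) s) s) :
    HasDerivAt (fun s => ∑ j ∈ Finset.range (k+1), ((b - s)^j / (j.factorial : ℝ)) • g j s)
      (((b - s)^k / (k.factorial : ℝ)) • g (k+1) s) s := by
  induction k with
  | zero => simpa using hg 0 (by simp)
  | succ k ih =>
    have h1 := ih (fun j hj => hg j (by omega))
    have h2 : HasDerivAt (fun s : ℝ => (b - s)^(k+1) / ((k+1).factorial : ℝ))
        (-((b - s)^k / (k.factorial : ℝ))) s := by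
      have h3 : HasDerivAt (fun s : ℝ => b - s) (-1) s := by
        simpa using (hasDerivAt_id s).const_sub b
      refine ((h3.pow (k+1)).div_const ((k+1).factorial : ℝ)).congr_deriv ?_
      have : (k.factorial : ℝ) ≠ 0 := by positivity
      rw [Nat.factorial_succ]
      push_cast
      field_simp
    have h4 := h1.add (h2.smul (hg (k+1) (by omega)))
    have e : (fun s => ∑ j ∈ Finset.range (k+1+1), ((b - s)^j / (j.factorial : ℝ)) • g j s)
      = (fun s => ∑ j ∈ Finset.range (k+1), ((b - s)^j / (j.factorial : ℝ)) • g j s) +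
        ((fun s : ℝ => (b - s)^(k+1) / ((k+1).factorial : ℝ)) • (g (k+1))) := by
      ext s
      rw [Finset.sum_range_succ]; rfl
    rw [e]
    convert h4 using 1
    simp only [neg_smul]
    abel

lemma aux_taylor_rem {F : Type*} [NormedAddCommGroup F] [NormedSpace ℝ F] [CompleteSpace F]
    (g : ℕ → ℝ → F) (b : ℝ) (hb0 : 0 ≤ b) (hb1 : b ≤ 1) (k : ℕ)
    (hg : ∀ j < k + 1, ∀ s ∈ Set.Icc (0:ℝ) 1, HasDerivAt (g j) (g (j+1) s) s)
    (hc : ContinuousOn (g (k+1)) (Set.Icc 0 1)) :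
    ‖g 0 b - ∑ j ∈ Finset.range (k+1), (b^j / (j.factorial : ℝ)) • g j 0‖ₑ ≤
      ∫⁻ s in Set.Ioc (0:ℝ) 1, ‖g (k+1) s‖ₑ := by
  have hsub : Set.uIcc 0 b ⊆ Set.Icc (0:ℝ) 1 := by
    rw [Set.uIcc_of_le hb0]; exact Set.Icc_subset_Icc le_rfl hb1
  have h := intervalIntegral.integral_eq_sub_of_hasDerivAt (a := 0) (b := b)
    (fun s hs => aux_taylor_deriv g b s k (fun j hj => hg j hj s (hsub hs)))
    (ContinuousOn.intervalIntegrable (ContinuousOn.smul (by fun_prop) (hc.mono hsub)))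
  have e1 : ∑ j ∈ Finset.range (k+1), ((b - b)^j / (j.factorial : ℝ)) • g j b = g 0 b := by
    rw [Finset.sum_range_succ']
    simp
  rw [e1] at h
  simp only [sub_zero] at h
  rw [← h, intervalIntegral.integral_of_le hb0]
  refine (enorm_integral_le_lintegral_enorm _).trans ?_
  refine (lintegral_mono_set (Set.Ioc_subset_Ioc le_rfl hb1)).trans' ?_
  refine setLIntegral_mono' measurableSet_Ioc ?_
  intro s hs
  rw [enorm_smul]
  refine mul_le_of_le_one_left (zero_le) ?_
  rw [← ofReal_norm, Real.norm_eq_abs]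
  refine ENNReal.ofReal_le_one.2 ?_
  rw [abs_of_nonneg (by have := hs.2; have : 0 ≤ b - s := by linarith
                        positivity)]
  refine div_le_one_of_le₀ ?_ (by positivity)
  refine (pow_le_one₀ (by linarith [hs.2]) (by linarith [hs.1])).trans ?_
  exact_mod_cast Nat.factorial_pos k

lemma aux_weights (n : ℕ) (hn : 2 ≤ n) : ∃ w : Fin n → ℝ,
    ∀ j : Fin n, ∑ i, w i * ((i : ℝ) / n) ^ (j : ℕ) = if (j : ℕ) = 1 then 1 else 0 := by
  set V := Matrix.vandermonde (fun i : Fin n => (i : ℝ) / n) with hV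
  have hdet : V.det ≠ 0 := by
    rw [hV, Matrix.det_vandermonde_ne_zero_iff]
    intro i j hij
    have : (n:ℝ) ≠ 0 := by positivity
    simp only at hij
    field_simp at hij
    exact Fin.ext (by exact_mod_cast hij)
  refine ⟨Matrix.vecMul (Pi.single (⟨1, hn⟩ : Fin n) 1) V⁻¹, fun j => ?_⟩
  have h : Matrix.vecMul (Matrix.vecMul (Pi.single (⟨1, hn⟩ : Fin n) (1:ℝ)) V⁻¹) V
      = Pi.single (⟨1, hn⟩ : Fin n) 1 := by
    rw [Matrix.vecMul_vecMul, Matrix.nonsing_inv_mul _ (isUnit_iff_ne_zero.2 hdet),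
      Matrix.vecMul_one]
  have h2 := congrFun h j
  rw [Matrix.vecMul, dotProduct] at h2
  simp only [hV, Matrix.vandermonde_apply] at h2
  rw [h2, Pi.single_apply]
  simp [Fin.ext_iff]

lemma aux_oneD (k : ℕ) (hk : 2 ≤ k) : ∃ C : ℝ, 0 < C ∧
    ∀ {F : Type} [NormedAddCommGroup F] [NormedSpace ℝ F] [CompleteSpace F]
    (g : ℕ → ℝ → F) (S : ℝ)
    (_ : ∀ j < k, ∀ s ∈ Set.Icc (0:ℝ) 1, HasDerivAt (g j) (g (j+1) s) s)
    (_ : ContinuousOn (g k) (Set.Icc 0 1))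
    (_ : ∀ s ∈ Set.Icc (0:ℝ) 1, ‖g 0 s‖ ≤ S),
    ‖g 1 0‖ₑ ≤ ENNReal.ofReal C * (ENNReal.ofReal S + ∫⁻ s in Set.Ioc (0:ℝ) 1, ‖g k s‖ₑ) := by
  obtain ⟨w, hw⟩ := aux_weights k hk
  obtain ⟨n, rfl⟩ : ∃ n, k = n + 1 := ⟨k - 1, by omega⟩
  refine ⟨∑ i, |w i| + 1, by positivity, ?_⟩
  intro F _ _ _ g S hg hc hS
  set I := ∫⁻ s in Set.Ioc (0:ℝ) 1, ‖g (n+1) s‖ₑ with hI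
  have hk0 : (0:ℝ) < ((n+1:ℕ):ℝ) := by positivity
  have hs : ∀ i : Fin (n+1), ((i:ℝ) / ((n+1:ℕ):ℝ)) ∈ Set.Icc (0:ℝ) 1 := fun i =>
    ⟨by positivity, by rw [div_le_one hk0]; exact_mod_cast i.2.le⟩
  have key : g 1 0 = ∑ i : Fin (n+1), w i • ∑ j ∈ Finset.range (n+1),
      (((i:ℝ) / ((n+1:ℕ):ℝ))^j / (j.factorial : ℝ)) • g j 0 := by
    simp_rw [Finset.smul_sum]
    rw [Finset.sum_comm, Finset.sum_eq_single 1]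
    · simp_rw [smul_smul]
      rw [← Finset.sum_smul]
      have := hw ⟨1, by omega⟩
      simp only [if_true] at this
      simp at *
      rw [this, one_smul]
    · intro j hj hj1
      have := hw ⟨j, Finset.mem_range.1 hj⟩
      simp only [if_neg hj1] at this
      simp_rw [smul_smul, ← mul_div_assoc]
      rw [← Finset.sum_smul, ← Finset.sum_div, this]
      simp
    · intro h; exact absurd (Finset.mem_range.2 (by omega)) h
  rw [key]
  refine (enorm_sum_le _ _).trans ?_
  have : ∀ i ∈ (Finset.univ : Finset (Fin (n+1))), ‖w i • ∑ j ∈ Finset.range (n+1),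
      (((i:ℝ) / ((n+1:ℕ):ℝ))^j / (j.factorial : ℝ)) • g j 0‖ₑ ≤
      ENNReal.ofReal |w i| * (ENNReal.ofReal S + I) := by
    intro i _
    rw [enorm_smul, Real.enorm_eq_ofReal_abs]
    gcongr
    have h1 := aux_taylor_rem g _ (hs i).1 (hs i).2 n hg hc
    have h2 : ‖g 0 ((i:ℝ) / ((n+1:ℕ):ℝ))‖ₑ ≤ ENNReal.ofReal S := by
      rw [← ofReal_norm]; exact ENNReal.ofReal_le_ofReal (hS _ (hs i))
    calc _ = ‖g 0 ((i:ℝ) / ((n+1:ℕ):ℝ)) - (g 0 ((i:ℝ) / ((n+1:ℕ):ℝ)) - ∑ j ∈ Finset.range (n+1),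
      (((i:ℝ) / ((n+1:ℕ):ℝ))^j / (j.factorial : ℝ)) • g j 0)‖ₑ := by congr 1; abel
      _ ≤ _ := enorm_sub_le
      _ ≤ _ := add_le_add h2 h1
  refine (Finset.sum_le_sum this).trans ?_
  rw [← Finset.sum_mul, ← ENNReal.ofReal_sum_of_nonneg (fun _ _ => abs_nonneg _)]
  gcongr
  linarith

lemma aux_ray {E F : Type} [NormedAddCommGroup E] [NormedSpace ℝ E]
    [NormedAddCommGroup F] [NormedSpace ℝ F] [CompleteSpace F] (k : ℕ) (hk : 2 ≤ k) (C : ℝ)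
    (hC : ∀ (g : ℕ → ℝ → F) (S : ℝ)
    (_ : ∀ j < k, ∀ s ∈ Set.Icc (0:ℝ) 1, HasDerivAt (g j) (g (j+1) s) s)
    (_ : ContinuousOn (g k) (Set.Icc 0 1))
    (_ : ∀ s ∈ Set.Icc (0:ℝ) 1, ‖g 0 s‖ ≤ S),
    ‖g 1 0‖ₑ ≤ ENNReal.ofReal C * (ENNReal.ofReal S + ∫⁻ s in Set.Ioc (0:ℝ) 1, ‖g k s‖ₑ))
    (Ω : Set E) (hΩ : IsOpen Ω) (u : E → F) (hu : ContDiffOn ℝ k u Ω) (S : ℝ)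
    (hS : ∀ y ∈ Ω, ‖u y‖ ≤ S) (x w : E) (hw : ∀ s ∈ Set.Icc (0:ℝ) 1, x + s • w ∈ Ω) :
    ‖fderivWithin ℝ u Ω x w‖ₑ ≤ ENNReal.ofReal C * (ENNReal.ofReal S +
      ‖w‖ₑ ^ k * ∫⁻ s in Set.Ioc (0:ℝ) 1, ‖iteratedFDerivWithin ℝ k u Ω (x + s • w)‖ₑ) := by
  have hx : x ∈ Ω := by simpa using hw 0 (by simp)
  have h := hC (fun j s => iteratedFDerivWithin ℝ j u Ω (x + s • w) (fun _ => w)) S ?_ ?_ ?_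
  · simp only [zero_smul, add_zero] at h
    rw [iteratedFDerivWithin_one_apply (hΩ.uniqueDiffWithinAt hx)] at h
    refine h.trans ?_
    gcongr
    rw [← lintegral_const_mul']
    · refine lintegral_mono fun s => ?_
      simp only
      rw [mul_comm]
      have h0 := ContinuousMultilinearMap.le_opNorm
        (iteratedFDerivWithin ℝ k u Ω (x + s • w)) (fun _ => w)
      rw [Finset.prod_const, Finset.card_univ, Fintype.card_fin] at h0
      rw [← ofReal_norm, ← ofReal_norm, ← ofReal_norm, ← ENNReal.ofReal_pow (norm_nonneg _),
        ← ENNReal.ofReal_mul (norm_nonneg _)]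
      exact ENNReal.ofReal_le_ofReal h0
    · exact ENNReal.pow_ne_top enorm_ne_top
  · intro j hj s hs
    have hd := (hu.differentiableOn_iteratedFDerivWithin (m := j) (by exact_mod_cast hj)
      hΩ.uniqueDiffOn _ (hw s hs)).hasFDerivWithinAt.hasFDerivAt (hΩ.mem_nhds (hw s hs))
    have hl : HasDerivAt (fun s : ℝ => x + s • w) w s := by
      simpa using ((hasDerivAt_id s).smul_const w).const_add x
    have h1 := hd.comp_hasDerivAt s hl
    have h2 := (ContinuousMultilinearMap.apply ℝ (fun _ : Fin j => E) F
      (fun _ => w)).hasFDerivAt.comp_hasDerivAt s h1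
    rw [iteratedFDerivWithin_succ_apply_left]
    exact h2
  · have h1 : ContinuousOn (fun s : ℝ => iteratedFDerivWithin ℝ k u Ω (x + s • w))
        (Set.Icc 0 1) :=
      (hu.continuousOn_iteratedFDerivWithin le_rfl hΩ.uniqueDiffOn).comp
        (by fun_prop) (fun s hs => hw s hs)
    exact (ContinuousMultilinearMap.apply ℝ (fun _ : Fin k => E) F
      (fun _ => w)).continuous.comp_continuousOn h1
  · intro s hs
    simpa using hS _ (hw s hs)

lemma aux_scale {E : Type} [NormedAddCommGroup E] [NormedSpace ℝ E] [MeasurableSpace E]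
    [BorelSpace E] [FiniteDimensional ℝ E] (μ : Measure E) [μ.IsAddHaarMeasure]
    (G : E → ℝ≥0∞) (hG : Measurable G) (x : E) (τ : ℝ) (hτ : 0 < τ) (a : ℝ≥0∞)
    (h : ∫⁻ y in Metric.ball x τ, G y ∂μ ≤ a * μ (Metric.ball x τ)) :
    ∫⁻ v in Metric.ball 0 1, G (x + τ • v) ∂μ ≤ a * μ (Metric.ball 0 1) := by
  have e0 : ∀ v, (Metric.ball (0:E) 1).indicator (fun v => G (x + τ • v)) v =
      (Metric.ball x τ).indicator G (x + τ • v) := by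
    intro v
    have : v ∈ Metric.ball (0:E) 1 ↔ x + τ • v ∈ Metric.ball x τ := by
      simp [norm_smul, abs_of_pos hτ, hτ]
    by_cases hv : v ∈ Metric.ball (0:E) 1
    · rw [Set.indicator_of_mem hv, Set.indicator_of_mem (this.1 hv)]
    · rw [Set.indicator_of_notMem hv, Set.indicator_of_notMem (fun h => hv (this.2 h))]
  have hH : Measurable ((Metric.ball x τ).indicator G) := hG.indicator measurableSet_ball
  rw [← lintegral_indicator measurableSet_ball, lintegral_congr e0]
  have e1 : ∫⁻ v, (Metric.ball x τ).indicator G (x + τ • v) ∂μ =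
      ∫⁻ y, (Metric.ball x τ).indicator G (x + y) ∂(Measure.map (fun v => τ • v) μ) := by
    exact (lintegral_map (hH.comp (measurable_const_add x)) (measurable_const_smul τ)).symm
  rw [e1, Measure.map_addHaar_smul μ hτ.ne', lintegral_smul_measure,
    lintegral_add_left_eq_self, lintegral_indicator measurableSet_ball]
  rw [Measure.addHaar_ball_of_pos μ x hτ] at h
  rw [smul_eq_mul]
  calc _ ≤ ENNReal.ofReal |(τ ^ Module.finrank ℝ E)⁻¹| *
        (a * (ENNReal.ofReal (τ ^ Module.finrank ℝ E) * μ (Metric.ball 0 1))) := by gcongr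
    _ = (ENNReal.ofReal |(τ ^ Module.finrank ℝ E)⁻¹| * ENNReal.ofReal (τ ^ Module.finrank ℝ E))
        * (a * μ (Metric.ball 0 1)) := by ring
    _ = _ := by
      rw [← ENNReal.ofReal_mul (abs_nonneg _), abs_of_pos (by positivity),
        inv_mul_cancel₀ (by positivity)]
      simp

lemma aux_interp (m k : ℕ) (hk : 2 ≤ k) : ∃ C : ℝ, 0 < C ∧ ∀ (ν : ℕ)
    (Ω : Set (EuclideanSpace ℝ (Fin m))), IsOpen Ω →
      ∀ (u : EuclideanSpace ℝ (Fin m) → EuclideanSpace ℝ (Fin ν)), ContDiffOn ℝ k u Ω →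
      ∀ (S : ℝ), 0 ≤ S → (∀ y ∈ Ω, ‖u y‖ ≤ S) → ∀ x (r a : ℝ), 0 < r → 0 ≤ a →
      Metric.ball x r ⊆ Ω →
      (∀ τ : ℝ, 0 < τ → τ ≤ r → ∫⁻ y in Metric.ball x τ, ‖iteratedFDerivWithin ℝ k u Ω y‖ₑ ≤
        ENNReal.ofReal a * volume (Metric.ball x τ)) →
      r * ‖fderivWithin ℝ u Ω x‖ ≤ C * (S + r ^ k * a) := by
  obtain ⟨C, hC0, hC⟩ := aux_oneD k hk
  refine ⟨8 * C * 4 ^ m, by positivity, ?_⟩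
  intro ν Ω hΩ u hu S hS0 hS x r a hr ha hball hM
  set L := fderivWithin ℝ u Ω x with hL
  by_cases hL0 : ‖L‖ = 0
  · rw [hL0]; simp; positivity
  have hLpos : 0 < ‖L‖ := lt_of_le_of_ne (norm_nonneg _) (Ne.symm hL0)
  obtain ⟨e, he1, he2⟩ := L.exists_lt_apply_of_lt_opNorm (r := 3/4 * ‖L‖) (by linarith)
  set V := Metric.ball ((1/2 : ℝ) • e) (1/4 : ℝ) with hV
  have hVsub : V ⊆ Metric.ball 0 1 := by
    apply Metric.ball_subset_ball'
    simp [norm_smul]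
    linarith
  have hVlow : ∀ v ∈ V, ‖L‖ / 8 ≤ ‖L v‖ := by
    intro v hv
    rw [hV, Metric.mem_ball, dist_eq_norm] at hv
    have h1 : ‖L (v - (1/2:ℝ) • e)‖ ≤ ‖L‖ * (1/4) := (L.le_opNorm _).trans (by gcongr)
    have h2 : ‖L ((1/2:ℝ) • e)‖ = 1/2 * ‖L e‖ := by rw [map_smul, norm_smul]; norm_num
    have h3 : ‖L ((1/2:ℝ) • e)‖ ≤ ‖L v‖ + ‖L (v - (1/2:ℝ) • e)‖ := by
      have : L ((1/2:ℝ) • e) = L v - L (v - (1/2:ℝ) • e) := by rw [map_sub]; abel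
      rw [this]; exact norm_sub_le _ _
    linarith
  set G : EuclideanSpace ℝ (Fin m) → ℝ≥0∞ :=
    Ω.indicator (fun y => ‖iteratedFDerivWithin ℝ k u Ω y‖ₑ) with hG
  have hGm : Measurable G := by
    classical
    have hc : ContinuousOn (fun y => ‖iteratedFDerivWithin ℝ k u Ω y‖ₑ) Ω :=
      continuous_enorm.comp_continuousOn
        (hu.continuousOn_iteratedFDerivWithin le_rfl hΩ.uniqueDiffOn)
    rw [hG, ← Set.piecewise_eq_indicator]
    exact hc.measurable_piecewise continuousOn_const hΩ.measurableSet
  have hmem : ∀ v ∈ Metric.ball (0 : EuclideanSpace ℝ (Fin m)) 1, ∀ s ∈ Set.Icc (0:ℝ) 1,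
      x + s • (r • v) ∈ Ω := by
    intro v hv s hs
    apply hball
    simp only [Metric.mem_ball, dist_self_add_left, norm_smul, Real.norm_eq_abs, abs_of_pos hr,
      abs_of_nonneg hs.1]
    have hv' : ‖v‖ < 1 := by simpa using hv
    have h1 : r * ‖v‖ < r * 1 := by gcongr
    have h2 : s * (r * ‖v‖) ≤ 1 * (r * ‖v‖) := by
      have := hs.2
      gcongr
    linarith
  have hray : ∀ v ∈ V, ENNReal.ofReal (r * ‖L‖ / 8) ≤ ENNReal.ofReal C * (ENNReal.ofReal S +
      ENNReal.ofReal (r ^ k) * ∫⁻ s in Set.Ioc (0:ℝ) 1, G (x + (s * r) • v)) := by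
    intro v hv
    have h1 := aux_ray k hk C (fun g => hC g) Ω hΩ u hu S hS x (r • v) (hmem v (hVsub hv))
    have h2 : ENNReal.ofReal (r * ‖L‖ / 8) ≤ ‖L (r • v)‖ₑ := by
      rw [← ofReal_norm, map_smul, norm_smul, Real.norm_eq_abs, abs_of_pos hr]
      apply ENNReal.ofReal_le_ofReal
      have := hVlow v hv
      rw [mul_div_assoc]
      gcongr
    refine h2.trans (h1.trans ?_)
    have hv' : ‖v‖ < 1 := by simpa using hVsub hv
    have hA : ∫⁻ s in Set.Ioc (0:ℝ) 1, ‖iteratedFDerivWithin ℝ k u Ω (x + s • r • v)‖ₑ ≤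
        ∫⁻ s in Set.Ioc (0:ℝ) 1, G (x + (s * r) • v) := by
      refine setLIntegral_mono' measurableSet_Ioc fun s hs => ?_
      have := hmem v (hVsub hv) s ⟨hs.1.le, hs.2⟩
      rw [mul_smul, hG, Set.indicator_of_mem this]
    have hB : ‖r • v‖ₑ ^ k ≤ ENNReal.ofReal (r ^ k) := by
      rw [← ofReal_norm, ← ENNReal.ofReal_pow (norm_nonneg _)]
      apply ENNReal.ofReal_le_ofReal
      gcongr
      rw [norm_smul, Real.norm_eq_abs, abs_of_pos hr]
      nlinarith
    exact mul_le_mul' le_rfl (add_le_add le_rfl (mul_le_mul' hB hA))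
  -- integrate over V
  have hGjm : Measurable (fun p : EuclideanSpace ℝ (Fin m) × ℝ => G (x + (p.2 * r) • p.1)) :=
    hGm.comp (by fun_prop)
  have hGs : ∀ s ∈ Set.Ioc (0:ℝ) 1, ∫⁻ v in V, G (x + (s * r) • v) ≤
      ENNReal.ofReal a * volume (Metric.ball (0 : EuclideanSpace ℝ (Fin m)) 1) := by
    intro s hs
    refine (lintegral_mono_set hVsub).trans ?_
    have hτ : 0 < s * r := mul_pos hs.1 hr
    refine aux_scale volume G hGm x (s * r) hτ _ ?_
    refine le_trans (lintegral_mono fun y => ?_) (hM (s*r) hτ (by nlinarith [hs.2]))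
    exact Set.indicator_le_self _ _ _
  have hint : ∫⁻ v in V, ∫⁻ s in Set.Ioc (0:ℝ) 1, G (x + (s * r) • v) ≤
      ENNReal.ofReal a * volume (Metric.ball (0 : EuclideanSpace ℝ (Fin m)) 1) := by
    rw [lintegral_lintegral_swap (by exact hGjm.aemeasurable)]
    refine (setLIntegral_mono' measurableSet_Ioc hGs).trans ?_
    simp
  have hvol : volume (Metric.ball (0 : EuclideanSpace ℝ (Fin m)) 1) =
      ENNReal.ofReal (4 ^ m) * volume V := by
    rw [hV, Measure.addHaar_ball_of_pos volume _ (by norm_num : (0:ℝ) < 1/4), ← mul_assoc,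
      ← ENNReal.ofReal_mul (by positivity), finrank_euclideanSpace_fin, ← mul_pow]
    norm_num
  have hVpos : volume V ≠ 0 := (Metric.measure_ball_pos volume _ (by norm_num)).ne'
  have hVtop : volume V ≠ ⊤ := measure_ball_lt_top.ne
  have hmain : ENNReal.ofReal (r * ‖L‖ / 8) * volume V ≤
      ENNReal.ofReal (C * (S + r ^ k * (a * 4 ^ m))) * volume V := by
    calc ENNReal.ofReal (r * ‖L‖ / 8) * volume V = ∫⁻ v in V, ENNReal.ofReal (r * ‖L‖ / 8) := by
          simp
      _ ≤ ∫⁻ v in V, ENNReal.ofReal C * (ENNReal.ofReal S +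
      ENNReal.ofReal (r ^ k) * ∫⁻ s in Set.Ioc (0:ℝ) 1, G (x + (s * r) • v)) :=
          setLIntegral_mono' measurableSet_ball hray
      _ = ENNReal.ofReal C * (ENNReal.ofReal S * volume V + ENNReal.ofReal (r ^ k) *
            ∫⁻ v in V, ∫⁻ s in Set.Ioc (0:ℝ) 1, G (x + (s * r) • v)) := by
          rw [lintegral_const_mul' _ _ ENNReal.ofReal_ne_top, lintegral_add_left measurable_const,
            lintegral_const_mul' _ _ ENNReal.ofReal_ne_top]
          simp
      _ ≤ ENNReal.ofReal C * (ENNReal.ofReal S * volume V + ENNReal.ofReal (r ^ k) *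
            (ENNReal.ofReal a * (ENNReal.ofReal (4 ^ m) * volume V))) := by
          rw [hvol] at hint
          gcongr
      _ = _ := by
          rw [ENNReal.ofReal_mul hC0.le, ENNReal.ofReal_add hS0 (by positivity),
            ENNReal.ofReal_mul (by positivity), ENNReal.ofReal_mul ha]
          ring
  rw [ENNReal.mul_le_mul_iff_left hVpos hVtop, ENNReal.ofReal_le_ofReal_iff (by positivity)] at hmain
  have h4 : (1:ℝ) ≤ 4 ^ m := one_le_pow₀ (by norm_num)
  have h5 : S ≤ S * 4 ^ m := le_mul_of_one_le_right hS0 h4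
  calc r * ‖L‖ = 8 * (r * ‖L‖ / 8) := by ring
    _ ≤ 8 * (C * (S + r ^ k * (a * 4 ^ m))) := by gcongr
    _ ≤ 8 * (C * (S * 4 ^ m + r ^ k * (a * 4 ^ m))) := by gcongr
    _ = _ := by ring

lemma aux_le_maximal {m : ℕ} (Ω : Set (EuclideanSpace ℝ (Fin m)))
    (f : EuclideanSpace ℝ (Fin m) → ℝ≥0∞) (x : EuclideanSpace ℝ (Fin m)) (r : ℝ) (hr : 0 < r)
    (hsub : Metric.ball x r ⊆ Ω) :
    ∫⁻ y in Metric.ball x r, f y ≤ maximalFn Ω f x * volume (Metric.ball x r) := by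
  have h : (volume (Metric.ball x r))⁻¹ * ∫⁻ y in Ω ∩ Metric.ball x r, f y ≤ maximalFn Ω f x :=
    le_iSup₂_of_le r hr le_rfl
  rw [Set.inter_eq_right.2 hsub] at h
  have h0 : volume (Metric.ball x r) ≠ 0 := (Metric.measure_ball_pos volume _ hr).ne'
  have ht : volume (Metric.ball x r) ≠ ⊤ := measure_ball_lt_top.ne
  calc _ = (volume (Metric.ball x r))⁻¹ * (∫⁻ y in Metric.ball x r, f y)
        * volume (Metric.ball x r) := by
        rw [mul_comm (_)⁻¹, mul_assoc, ENNReal.inv_mul_cancel h0 ht, mul_one]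
    _ ≤ _ := by gcongr

lemma aux_self_le_maximal {m : ℕ} (Ω : Set (EuclideanSpace ℝ (Fin m))) (hΩ : IsOpen Ω)
    (f : EuclideanSpace ℝ (Fin m) → ℝ≥0∞) (hf : ContinuousOn f Ω)
    (x : EuclideanSpace ℝ (Fin m)) (hx : x ∈ Ω) : f x ≤ maximalFn Ω f x := by
  refine le_of_forall_lt fun c hc => ?_
  obtain ⟨d, hcd, hd⟩ := exists_between hc
  refine hcd.trans_le ?_
  have h1 : ∀ᶠ y in 𝓝 x, d < f y ∧ y ∈ Ω :=
    ((hf.continuousAt (hΩ.mem_nhds hx)).eventually (lt_mem_nhds hd)).and (hΩ.mem_nhds hx)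
  obtain ⟨r, hr, hsub⟩ := Metric.eventually_nhds_iff_ball.1 h1
  have h2 := aux_le_maximal Ω f x r hr (fun y hy => (hsub y hy).2)
  have h0 : volume (Metric.ball x r) ≠ 0 := (Metric.measure_ball_pos volume _ hr).ne'
  have ht : volume (Metric.ball x r) ≠ ⊤ := measure_ball_lt_top.ne
  have h3 : d * volume (Metric.ball x r) ≤ ∫⁻ y in Metric.ball x r, f y := by
    calc _ = ∫⁻ y in Metric.ball x r, d := by simp
      _ ≤ _ := setLIntegral_mono' measurableSet_ball fun y hy => (hsub y hy).1.le
  exact (ENNReal.mul_le_mul_iff_left h0 ht).1 (h3.trans h2)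

lemma aux_pow_add (a b : ℝ) (ha : 0 ≤ a) (hb : 0 ≤ b) (k : ℕ) (hk : 1 ≤ k) :
    a ^ k + b ^ k ≤ (a + b) ^ k := by
  obtain ⟨n, rfl⟩ : ∃ n, k = n + 1 := ⟨k - 1, by omega⟩
  have h1 : a ^ n ≤ (a + b) ^ n := by gcongr; linarith
  have h2 : b ^ n ≤ (a + b) ^ n := by gcongr; linarith
  rw [pow_succ, pow_succ, pow_succ, mul_add]
  gcongr

theorem pointwise_truncated_interpolation (m k : ℕ) (hm : 1 ≤ m) (hk : 1 ≤ k) :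
    ∃ C κ : ℝ, 0 < C ∧ 0 < κ ∧ ∀ (ν : ℕ), 1 ≤ ν →
      ∀ (Ω : Set (EuclideanSpace ℝ (Fin m))), IsOpen Ω →
      ∀ (u : EuclideanSpace ℝ (Fin m) → EuclideanSpace ℝ (Fin ν)),
        ContDiffOn ℝ k u Ω → Bornology.IsBounded (u '' Ω) →
      ∀ (t ρ : ℝ), 0 < t → 0 < ρ →
      ∀ x ∈ Ω, Metric.ball x ρ ⊆ Ω →
        (sSup ((fun y => ‖u y‖) '' Ω)) ^ k ≤ κ * t ^ k * ρ ^ k →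
        ENNReal.ofReal (max (‖fderivWithin ℝ u Ω x‖ - t) 0) ≤
          ENNReal.ofReal C *
            (maximalFn Ω
              (fun y => ENNReal.ofReal
                (max ((sSup ((fun z => ‖u z‖) '' Ω)) ^ (k - 1) *
                  ‖iteratedFDerivWithin ℝ k u Ω y‖ - κ * t ^ k) 0)) x) ^ (1 / (k : ℝ)) := by
  obtain rfl | hk2 : k = 1 ∨ 2 ≤ k := by omega
  · refine ⟨1, 1, one_pos, one_pos, ?_⟩
    intro ν _ Ω hΩ u hu hb t ρ ht hρ x hx hball _
    have hc : ContinuousOn (fun y => ENNReal.ofReal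
        (max ((sSup ((fun z => ‖u z‖) '' Ω)) ^ (1 - 1) *
          ‖iteratedFDerivWithin ℝ 1 u Ω y‖ - 1 * t ^ 1) 0)) Ω := by
      have h1 : ContinuousOn (fun y => ‖iteratedFDerivWithin ℝ 1 u Ω y‖) Ω :=
        (hu.continuousOn_iteratedFDerivWithin le_rfl hΩ.uniqueDiffOn).norm
      refine ENNReal.continuous_ofReal.comp_continuousOn ?_
      exact ContinuousOn.sup (ContinuousOn.sub (ContinuousOn.mul continuousOn_const h1)
        continuousOn_const) continuousOn_const
    have h2 := aux_self_le_maximal Ω hΩ _ hc x hx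
    simp only [Nat.cast_one, div_one, ENNReal.rpow_one, ENNReal.ofReal_one, one_mul] at h2 ⊢
    refine le_trans (le_of_eq ?_) h2
    rw [norm_iteratedFDerivWithin_one u (hΩ.uniqueDiffWithinAt hx)]
    simp
  obtain ⟨C₁, hC₁, hI⟩ := aux_interp m k hk2
  set q : ℝ := 1 / (2 * C₁) with hq
  have hq0 : 0 < q := by positivity
  refine ⟨2 * C₁, q ^ k, by positivity, by positivity, ?_⟩
  intro ν _ Ω hΩ u hu hb t ρ ht hρ x hx hball hle
  set S := sSup ((fun z => ‖u z‖) '' Ω) with hSdef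
  have hbdd : BddAbove ((fun z => ‖u z‖) '' Ω) := by
    obtain ⟨R, hR⟩ := hb.exists_norm_le
    refine ⟨R, ?_⟩
    rintro _ ⟨y, hy, rfl⟩
    exact hR _ ⟨y, hy, rfl⟩
  have hS : ∀ y ∈ Ω, ‖u y‖ ≤ S := fun y hy => le_csSup hbdd ⟨y, hy, rfl⟩
  have hS0 : 0 ≤ S := (norm_nonneg _).trans (hS x hx)
  have hk0 : k ≠ 0 := by omega
  have hSle : S ≤ q * t * ρ := by
    rw [← mul_pow, ← mul_pow] at hle
    exact (pow_le_pow_iff_left₀ hS0 (by positivity) hk0).1 hle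
  obtain hSz | hSpos := hS0.eq_or_lt
  · have hz : ∀ y ∈ Ω, u y = (fun _ => 0) y := fun y hy => by
      have := hS y hy
      rw [← hSz] at this
      exact norm_le_zero_iff.1 this
    rw [fderivWithin_congr hz (hz x hx)]
    have : ENNReal.ofReal (max (‖fderivWithin ℝ (fun _ => (0 : EuclideanSpace ℝ (Fin ν))) Ω x‖ - t)
        0) = 0 := by
      simp [ht.le]
    rw [this]
    exact zero_le
  set f : EuclideanSpace ℝ (Fin m) → ℝ≥0∞ := fun y => ENNReal.ofReal
                (max (S ^ (k - 1) *
                  ‖iteratedFDerivWithin ℝ k u Ω y‖ - q ^ k * t ^ k) 0) with hf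
  by_cases hA : maximalFn Ω f x = ⊤
  · have hkp : (0:ℝ) < 1 / (k:ℝ) := by positivity
    rw [hA, ENNReal.top_rpow_of_pos hkp, ENNReal.mul_top]
    · exact le_top
    · simp [hC₁]
  set α := (maximalFn Ω f x).toReal with hα
  have hα0 : 0 ≤ α := ENNReal.toReal_nonneg
  have hAα : maximalFn Ω f x = ENNReal.ofReal α := (ENNReal.ofReal_toReal hA).symm
  set β := α ^ (1 / (k:ℝ)) with hβ
  have hβ0 : 0 ≤ β := by positivity
  have hβk : β ^ k = α := by
    rw [hβ, one_div, Real.rpow_inv_natCast_pow hα0 hk0]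
  set s := q * t + β with hs
  have hs0 : 0 < s := by positivity
  set r := S / s with hr
  have hr0 : 0 < r := by positivity
  have hrρ : r ≤ ρ := by
    rw [hr, div_le_iff₀ hs0]
    have : 0 ≤ ρ * β := by positivity
    rw [hs]
    nlinarith
  have hrs : r * s = S := by rw [hr]; field_simp
  have hSk : 0 < S ^ (k-1) := by positivity
  set a := (α + q ^ k * t ^ k) / S ^ (k-1) with ha
  have hM : ∀ τ : ℝ, 0 < τ → τ ≤ r → ∫⁻ y in Metric.ball x τ, ‖iteratedFDerivWithin ℝ k u Ω y‖ₑ ≤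
        ENNReal.ofReal a * volume (Metric.ball x τ) := by
    intro τ hτ hτr
    have hsub : Metric.ball x τ ⊆ Ω :=
      (Metric.ball_subset_ball (hτr.trans hrρ)).trans hball
    have h1 := aux_le_maximal Ω f x τ hτ hsub
    rw [hAα] at h1
    calc _ ≤ ∫⁻ y in Metric.ball x τ, ENNReal.ofReal (S ^ (k-1))⁻¹ *
          (ENNReal.ofReal (q ^ k * t ^ k) + f y) := by
          refine lintegral_mono fun y => ?_
          simp only [hf]
          rw [← ofReal_norm, ← ENNReal.ofReal_add (by positivity) (le_max_right _ _),
            ← ENNReal.ofReal_mul (by positivity)]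
          apply ENNReal.ofReal_le_ofReal
          rw [inv_mul_eq_div, le_div_iff₀ hSk]
          have := le_max_left (S ^ (k - 1) * ‖iteratedFDerivWithin ℝ k u Ω y‖ - q ^ k * t ^ k) 0
          linarith
      _ = ENNReal.ofReal (S ^ (k-1))⁻¹ * (ENNReal.ofReal (q ^ k * t ^ k) *
            volume (Metric.ball x τ) + ∫⁻ y in Metric.ball x τ, f y) := by
          rw [lintegral_const_mul' _ _ ENNReal.ofReal_ne_top, lintegral_add_left measurable_const]
          simp
      _ ≤ ENNReal.ofReal (S ^ (k-1))⁻¹ * (ENNReal.ofReal (q ^ k * t ^ k) *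
            volume (Metric.ball x τ) + ENNReal.ofReal α * volume (Metric.ball x τ)) := by
          gcongr
      _ = _ := by
          rw [ha, div_eq_inv_mul, ENNReal.ofReal_mul (p := (S ^ (k-1))⁻¹) (by positivity),
            ENNReal.ofReal_add hα0 (by positivity)]
          ring
  have hmain := hI ν Ω hΩ u hu S hS0 hS x r a hr0 (by positivity)
    ((Metric.ball_subset_ball hrρ).trans hball) hM
  have hra : r ^ k * a ≤ S := by
    rw [ha, ← mul_div_assoc, div_le_iff₀ hSk]
    have h1 := aux_pow_add β (q * t) hβ0 (by positivity) k hk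
    rw [hβk, mul_pow, add_comm β, ← hs] at h1
    calc _ ≤ r ^ k * s ^ k := by gcongr
      _ = S ^ k := by rw [← mul_pow, hrs]
      _ = S * S ^ (k-1) := by rw [← pow_succ', Nat.sub_add_cancel hk]
  have hfin : ‖fderivWithin ℝ u Ω x‖ ≤ 2 * C₁ * s := by
    have h1 : r * ‖fderivWithin ℝ u Ω x‖ ≤ r * (2 * C₁ * s) := by
      calc _ ≤ C₁ * (S + r ^ k * a) := hmain
        _ ≤ C₁ * (S + S) := by gcongr
        _ = _ := by rw [← hrs]; ring
    exact le_of_mul_le_mul_left h1 hr0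
  have hqt : 2 * C₁ * s = t + 2 * C₁ * β := by
    rw [hs, hq]; field_simp
  rw [hAα, ENNReal.ofReal_rpow_of_nonneg hα0 (by positivity),
    ← ENNReal.ofReal_mul (by positivity)]
  apply ENNReal.ofReal_le_ofReal
  apply max_le
  · linarith
  · positivity
end

section
/- Let m ≥ 1 and ν ≥ 1 be integers, s ∈ (0,1), p ∈ [1,∞), and let Ω ⊆ ℝ^m be a nonempty bounded convex open set. Let (u_n) be a sequence of measurable maps Ω → ℝ^ν such that for every n, ∫_Ω ‖u_n‖^p < ∞ and ∬_{Ω×Ω} ‖u_n(x)−u_n(y)‖^p/‖x−y‖^{m+sp} dx dy < ∞, and let u : Ω → ℝ^ν be measurable. Then the following are equivalent: (i) lim_{n→∞} ∫_Ω ‖u_n − u‖^p = 0 and lim_{n→∞} ∬_{Ω×Ω} ‖(u_n−u)(x) − (u_n−u)(y)‖^p/‖x−y‖^{m+sp} dx dy = 0; (ii) lim_{n→∞} ∫_Ω ‖u_n − u‖^p = 0 and lim_{ρ→0⁺} sup_n ∬_{{(x,y)∈Ω×Ω : ‖x−y‖<ρ}} ‖u_n(x)−u_n(y)‖^p/‖x−y‖^{m+sp}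 dx dy = 0. -/
open MeasureTheory Filter Topology ENNReal

/-- Gagliardo integrand. -/
noncomputable def gagF {m ν : ℕ} (p a : ℝ)
    (w : EuclideanSpace ℝ (Fin m) → EuclideanSpace ℝ (Fin ν))
    (z : EuclideanSpace ℝ (Fin m) × EuclideanSpace ℝ (Fin m)) : ℝ≥0∞ :=
  ENNReal.ofReal (‖w z.1 - w z.2‖ ^ p / ‖z.1 - z.2‖ ^ a)

lemma gag_measurable {m ν : ℕ} (p a : ℝ)
    (w : EuclideanSpace ℝ (Fin m) → EuclideanSpace ℝ (Fin ν)) (hw : Measurable w) :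
    Measurable (gagF p a w) := by
  unfold gagF
  have h1 : Measurable fun z : EuclideanSpace ℝ (Fin m) × EuclideanSpace ℝ (Fin m) => w z.1 :=
    hw.comp measurable_fst
  have h2 : Measurable fun z : EuclideanSpace ℝ (Fin m) × EuclideanSpace ℝ (Fin m) => w z.2 :=
    hw.comp measurable_snd
  have h3 : Measurable fun z : EuclideanSpace ℝ (Fin m) × EuclideanSpace ℝ (Fin m) =>
    z.1 - z.2 := measurable_fst.sub measurable_snd
  exact (((h1.sub h2).norm.pow_const p).div (h3.norm.pow_const a)).ennreal_ofReal

lemma norm_quasi {F : Type*} [NormedAddCommGroup F] (p : ℝ) (hp : 1 ≤ p) (x y c : F)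
    (h : ‖c‖ ≤ ‖x‖ + ‖y‖) :
    ‖c‖ ^ p ≤ 2 ^ (p - 1) * (‖x‖ ^ p + ‖y‖ ^ p) := by
  have h1 : ‖c‖ ^ p ≤ (‖x‖ + ‖y‖) ^ p :=
    Real.rpow_le_rpow (norm_nonneg _) h (by linarith)
  refine h1.trans ?_
  have := NNReal.rpow_add_le_mul_rpow_add_rpow ‖x‖₊ ‖y‖₊ hp
  exact_mod_cast this

lemma gag_quasi {m ν : ℕ} (p a : ℝ) (hp : 1 ≤ p)
    (f g h : EuclideanSpace ℝ (Fin m) → EuclideanSpace ℝ (Fin ν))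
    (z : EuclideanSpace ℝ (Fin m) × EuclideanSpace ℝ (Fin m))
    (hz : ‖f z.1 - f z.2‖ ≤ ‖g z.1 - g z.2‖ + ‖h z.1 - h z.2‖) :
    gagF p a f z ≤ ENNReal.ofReal (2 ^ (p - 1)) * (gagF p a g z + gagF p a h z) := by
  unfold gagF
  rw [← ENNReal.ofReal_add (by positivity) (by positivity), ← ENNReal.ofReal_mul (by positivity)]
  apply ENNReal.ofReal_le_ofReal
  rw [← add_div, ← mul_div_assoc]
  gcongr
  exact norm_quasi p hp _ _ _ hz

lemma gag_quasi_int {m ν : ℕ} (p a : ℝ) (hp : 1 ≤ p)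
    (f g h : EuclideanSpace ℝ (Fin m) → EuclideanSpace ℝ (Fin ν))
    (hg : Measurable g) (hh : Measurable h)
    (hz : ∀ x y, ‖f x - f y‖ ≤ ‖g x - g y‖ + ‖h x - h y‖)
    (μ : Measure (EuclideanSpace ℝ (Fin m) × EuclideanSpace ℝ (Fin m))) :
    ∫⁻ z, gagF p a f z ∂μ ≤ ENNReal.ofReal (2 ^ (p - 1)) *
      (∫⁻ z, gagF p a g z ∂μ + ∫⁻ z, gagF p a h z ∂μ) := by
  have mg := gag_measurable p a g hg
  have mh := gag_measurable p a h hh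
  rw [← lintegral_add_left mg, ← lintegral_const_mul' _ _ ENNReal.ofReal_ne_top]
  exact lintegral_mono fun z => gag_quasi p a hp f g h z (hz _ _)

lemma gag_far {m ν : ℕ} (p a : ℝ) (hp : 1 ≤ p) (ha : 0 ≤ a) (ρ : ℝ) (hρ : 0 < ρ)
    (Ω : Set (EuclideanSpace ℝ (Fin m))) (hΩ : MeasurableSet Ω)
    (w : EuclideanSpace ℝ (Fin m) → EuclideanSpace ℝ (Fin ν)) (hw : Measurable w) :
    ∫⁻ z in (Ω ×ˢ Ω) \ {z | z.1 ∈ Ω ∧ z.2 ∈ Ω ∧ ‖z.1 - z.2‖ < ρ}, gagF p a w z ≤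
      ENNReal.ofReal (2 ^ (p - 1) / ρ ^ a) * (2 * volume Ω) *
        ∫⁻ x in Ω, ENNReal.ofReal (‖w x‖ ^ p) := by
  have mw : Measurable fun x => ENNReal.ofReal (‖w x‖ ^ p) :=
    (hw.norm.pow_const p).ennreal_ofReal
  have mw1 : Measurable fun z : EuclideanSpace ℝ (Fin m) × EuclideanSpace ℝ (Fin m) =>
    ENNReal.ofReal (‖w z.1‖ ^ p) := mw.comp measurable_fst
  have mw2 : Measurable fun z : EuclideanSpace ℝ (Fin m) × EuclideanSpace ℝ (Fin m) =>
    ENNReal.ofReal (‖w z.2‖ ^ p) := mw.comp measurable_snd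
  have mD : MeasurableSet {z : EuclideanSpace ℝ (Fin m) × EuclideanSpace ℝ (Fin m) |
      z.1 ∈ Ω ∧ z.2 ∈ Ω ∧ ‖z.1 - z.2‖ < ρ} :=
    (measurable_fst hΩ).inter ((measurable_snd hΩ).inter
      (measurableSet_lt (measurable_fst.sub measurable_snd).norm measurable_const))
  calc _ ≤ ∫⁻ z in (Ω ×ˢ Ω) \ {z | z.1 ∈ Ω ∧ z.2 ∈ Ω ∧ ‖z.1 - z.2‖ < ρ},
        ENNReal.ofReal (2 ^ (p - 1) / ρ ^ a) *
          (ENNReal.ofReal (‖w z.1‖ ^ p) + ENNReal.ofReal (‖w z.2‖ ^ p)) := by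
        refine setLIntegral_mono' ((hΩ.prod hΩ).diff mD) fun z hz => ?_
        have hz' : ρ ≤ ‖z.1 - z.2‖ := by
          by_contra hc
          exact hz.2 ⟨hz.1.1, hz.1.2, not_le.1 hc⟩
        unfold gagF
        rw [← ENNReal.ofReal_add (by positivity) (by positivity),
          ← ENNReal.ofReal_mul (by positivity)]
        apply ENNReal.ofReal_le_ofReal
        rw [div_mul_eq_mul_div]
        have := norm_quasi p hp (w z.1) (w z.2) (w z.1 - w z.2) (norm_sub_le _ _)
        gcongr
    _ ≤ ∫⁻ z in Ω ×ˢ Ω, ENNReal.ofReal (2 ^ (p - 1) / ρ ^ a) *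
          (ENNReal.ofReal (‖w z.1‖ ^ p) + ENNReal.ofReal (‖w z.2‖ ^ p)) :=
        lintegral_mono_set Set.sdiff_subset
    _ = _ := by
        rw [lintegral_const_mul' _ _ ENNReal.ofReal_ne_top, lintegral_add_left mw1,
          Measure.volume_eq_prod, ← Measure.prod_restrict,
          lintegral_prod _ mw1.aemeasurable, lintegral_prod _ mw2.aemeasurable]
        simp only [lintegral_const, Measure.restrict_apply_univ]
        rw [lintegral_mul_const _ mw]
        ring

lemma gag_near {m ν : ℕ} (p a : ℝ) (hp : 1 ≤ p)
    (Ω : Set (EuclideanSpace ℝ (Fin m))) (hΩ : MeasurableSet Ω)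
    (w : EuclideanSpace ℝ (Fin m) → EuclideanSpace ℝ (Fin ν)) (hw : Measurable w)
    (hfin : ∫⁻ z in Ω ×ˢ Ω, gagF p a w z ≠ ⊤) :
    Tendsto (fun ρ : ℝ => ∫⁻ z in {z | z.1 ∈ Ω ∧ z.2 ∈ Ω ∧ ‖z.1 - z.2‖ < ρ}, gagF p a w z)
      (𝓝[>] 0) (𝓝 0) := by
  have mD : ∀ ρ : ℝ, MeasurableSet {z : EuclideanSpace ℝ (Fin m) × EuclideanSpace ℝ (Fin m) |
      z.1 ∈ Ω ∧ z.2 ∈ Ω ∧ ‖z.1 - z.2‖ < ρ} := fun ρ =>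
    (measurable_fst hΩ).inter ((measurable_snd hΩ).inter
      (measurableSet_lt (measurable_fst.sub measurable_snd).norm measurable_const))
  have mg := gag_measurable p a w hw
  have key : Tendsto (fun ρ : ℝ => ∫⁻ z,
      ({z | z.1 ∈ Ω ∧ z.2 ∈ Ω ∧ ‖z.1 - z.2‖ < ρ}).indicator (gagF p a w) z)
      (𝓝[>] 0) (𝓝 (∫⁻ _ : EuclideanSpace ℝ (Fin m) × EuclideanSpace ℝ (Fin m), 0)) := by
    refine tendsto_lintegral_filter_of_dominated_convergence
      ((Ω ×ˢ Ω).indicator (gagF p a w)) ?_ ?_ ?_ ?_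
    · exact Eventually.of_forall fun ρ => mg.indicator (mD ρ)
    · refine Eventually.of_forall fun ρ => Eventually.of_forall fun z => ?_
      have hs : {z : EuclideanSpace ℝ (Fin m) × EuclideanSpace ℝ (Fin m) |
          z.1 ∈ Ω ∧ z.2 ∈ Ω ∧ ‖z.1 - z.2‖ < ρ} ⊆ Ω ×ˢ Ω := fun z hz => ⟨hz.1, hz.2.1⟩
      exact Set.indicator_le_indicator_of_subset hs (fun _ => bot_le) z
    · rwa [lintegral_indicator (hΩ.prod hΩ)]
    · refine Eventually.of_forall fun z => ?_
      apply tendsto_const_nhds.congr'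
      by_cases hz : z.1 = z.2
      · refine Eventually.of_forall fun ρ => ?_
        have : gagF p a w z = 0 := by
          unfold gagF
          rw [hz]
          simp [Real.zero_rpow (by linarith : p ≠ 0)]
        exact (Set.indicator_apply_eq_zero.2 fun _ => this).symm
      · have hpos : 0 < ‖z.1 - z.2‖ := norm_pos_iff.2 (sub_ne_zero.2 hz)
        filter_upwards [nhdsWithin_le_nhds (Iio_mem_nhds hpos)] with ρ hρ
        rw [Set.indicator_of_notMem]
        exact fun h => absurd h.2.2 (not_lt.2 (le_of_lt hρ))
  rw [lintegral_zero] at key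
  refine key.congr fun ρ => ?_
  rw [lintegral_indicator (mD ρ)]

lemma gag_fatou {m ν : ℕ} (p a : ℝ) (hp : 1 ≤ p)
    (Ω : Set (EuclideanSpace ℝ (Fin m)))
    (u : ℕ → EuclideanSpace ℝ (Fin m) → EuclideanSpace ℝ (Fin ν))
    (hum : ∀ n, Measurable (u n))
    (u₀ : EuclideanSpace ℝ (Fin m) → EuclideanSpace ℝ (Fin ν)) (hu₀ : Measurable u₀)
    (hconv : Tendsto (fun n => ∫⁻ x in Ω, ENNReal.ofReal (‖u n x - u₀ x‖ ^ p))
        atTop (𝓝 0))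
    (D : Set (EuclideanSpace ℝ (Fin m) × EuclideanSpace ℝ (Fin m))) (hD : D ⊆ Ω ×ˢ Ω) :
    ∫⁻ z in D, gagF p a u₀ z ≤ ⨆ n, ∫⁻ z in D, gagF p a (u n) z := by
  have hp0 : 0 < p := by linarith
  have h1 : Tendsto (fun n => eLpNorm (u n - u₀) (ENNReal.ofReal p) (volume.restrict Ω))
      atTop (𝓝 0) := by
    have : Tendsto (fun n => (∫⁻ x in Ω, ENNReal.ofReal (‖u n x - u₀ x‖ ^ p)) ^ (1 / p))
        atTop (𝓝 0) := by
      have h := hconv.ennrpow_const (1 / p)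
      rwa [ENNReal.zero_rpow_of_pos (by positivity)] at h
    refine this.congr fun n => ?_
    rw [eLpNorm_eq_lintegral_rpow_enorm_toReal (by simpa using hp0) ENNReal.ofReal_ne_top,
      ENNReal.toReal_ofReal hp0.le]
    congr 1
    refine lintegral_congr fun x => ?_
    rw [← ENNReal.ofReal_rpow_of_nonneg (norm_nonneg _) hp0.le, ofReal_norm]
    rfl
  have h2 := tendstoInMeasure_of_tendsto_eLpNorm (by simpa using hp0)
    (fun n => (hum n).aestronglyMeasurable) hu₀.aestronglyMeasurable h1
  obtain ⟨k, -, hk⟩ := h2.exists_seq_tendsto_ae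
  have hk1 : ∀ᵐ z ∂((volume.restrict Ω).prod (volume.restrict Ω)),
      Tendsto (fun i => u (k i) z.1) atTop (𝓝 (u₀ z.1)) :=
    Measure.quasiMeasurePreserving_fst.ae hk
  have hk2 : ∀ᵐ z ∂((volume.restrict Ω).prod (volume.restrict Ω)),
      Tendsto (fun i => u (k i) z.2) atTop (𝓝 (u₀ z.2)) :=
    Measure.quasiMeasurePreserving_snd.ae hk
  rw [Measure.prod_restrict, ← Measure.volume_eq_prod] at hk1 hk2
  have hk1' := ae_mono (Measure.restrict_mono_set volume hD) hk1
  have hk2' := ae_mono (Measure.restrict_mono_set volume hD) hk2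
  calc ∫⁻ z in D, gagF p a u₀ z
      = ∫⁻ z in D, liminf (fun i => gagF p a (u (k i)) z) atTop := by
        refine lintegral_congr_ae ?_
        filter_upwards [hk1', hk2'] with z h1 h2
        symm
        apply Tendsto.liminf_eq
        unfold gagF
        refine ENNReal.tendsto_ofReal (Tendsto.div_const ?_ _)
        exact ((h1.sub h2).norm).rpow_const (Or.inr hp0.le)
    _ ≤ liminf (fun i => ∫⁻ z in D, gagF p a (u (k i)) z) atTop :=
        lintegral_liminf_le fun i => gag_measurable p a _ (hum _)
    _ ≤ _ := by
        refine liminf_le_of_le (by isBoundedDefault) fun b hb => ?_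
        obtain ⟨i, hi⟩ := hb.exists
        exact hi.trans (le_iSup (fun n => ∫⁻ z in D, gagF p a (u n) z) (k i))

/-- Equivalence between strong convergence in the fractional Sobolev space
`W^{s,p}` (0 < s < 1) and `L^p` convergence together with uniform vanishing of
the Gagliardo seminorm localized at small scales (Proposition 4.1, case
0 < s < 1). -/
theorem fractional_strong_iff_equiintegrable
    (m ν : ℕ) (hm : 1 ≤ m) (hν : 1 ≤ ν)
    (s : ℝ) (hs : s ∈ Set.Ioo (0:ℝ) 1) (p : ℝ) (hp : 1 ≤ p)
    (Ω : Set (EuclideanSpace ℝ (Fin m))) (hne : Ω.Nonempty)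
    (hbd : Bornology.IsBounded Ω) (hcx : Convex ℝ Ω) (hop : IsOpen Ω)
    (u : ℕ → EuclideanSpace ℝ (Fin m) → EuclideanSpace ℝ (Fin ν))
    (hum : ∀ n, Measurable (u n))
    (hLp : ∀ n, (∫⁻ x in Ω, ENNReal.ofReal (‖u n x‖ ^ p)) < ⊤)
    (hGag : ∀ n, (∫⁻ z in Ω ×ˢ Ω,
      ENNReal.ofReal (‖u n z.1 - u n z.2‖ ^ p / ‖z.1 - z.2‖ ^ ((m : ℝ) + s * p))) < ⊤)
    (u₀ : EuclideanSpace ℝ (Fin m) → EuclideanSpace ℝ (Fin ν))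
    (hu₀ : Measurable u₀) :
    ((Tendsto (fun n => ∫⁻ x in Ω, ENNReal.ofReal (‖u n x - u₀ x‖ ^ p))
        atTop (𝓝 0)) ∧
      Tendsto (fun n => ∫⁻ z in Ω ×ˢ Ω,
          ENNReal.ofReal
            (‖(u n z.1 - u₀ z.1) - (u n z.2 - u₀ z.2)‖ ^ p
              / ‖z.1 - z.2‖ ^ ((m : ℝ) + s * p)))
        atTop (𝓝 0))
    ↔
    ((Tendsto (fun n => ∫⁻ x in Ω, ENNReal.ofReal (‖u n x - u₀ x‖ ^ p))
        atTop (𝓝 0)) ∧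
      Tendsto (fun ρ : ℝ => ⨆ n,
          ∫⁻ z in {z : EuclideanSpace ℝ (Fin m) × EuclideanSpace ℝ (Fin m) |
              z.1 ∈ Ω ∧ z.2 ∈ Ω ∧ ‖z.1 - z.2‖ < ρ},
            ENNReal.ofReal
              (‖u n z.1 - u n z.2‖ ^ p / ‖z.1 - z.2‖ ^ ((m : ℝ) + s * p)))
        (𝓝[>] 0) (𝓝 0)) := by
  have hp0 : 0 < p := by linarith
  have ha : 0 ≤ (m : ℝ) + s * p := by have := hs.1; positivity
  generalize (m : ℝ) + s * p = a at *
  have hΩ : MeasurableSet Ω := hop.measurableSet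
  have hvol : volume Ω ≠ ⊤ := hbd.measure_lt_top.ne
  set C : ℝ≥0∞ := ENNReal.ofReal (2 ^ (p - 1)) with hC
  have hCt : C ≠ ⊤ := ENNReal.ofReal_ne_top
  have hwm : ∀ n, Measurable (fun x => u n x - u₀ x) := fun n => (hum n).sub hu₀
  have hsub : ∀ ρ : ℝ, {z : EuclideanSpace ℝ (Fin m) × EuclideanSpace ℝ (Fin m) |
      z.1 ∈ Ω ∧ z.2 ∈ Ω ∧ ‖z.1 - z.2‖ < ρ} ⊆ Ω ×ˢ Ω := fun ρ z hz => ⟨hz.1, hz.2.1⟩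
  change (_ ∧ Tendsto (fun n => ∫⁻ z in Ω ×ˢ Ω, gagF p a (fun x => u n x - u₀ x) z)
      atTop (𝓝 0)) ↔ (_ ∧ Tendsto (fun ρ : ℝ => ⨆ n,
          ∫⁻ z in {z : EuclideanSpace ℝ (Fin m) × EuclideanSpace ℝ (Fin m) |
              z.1 ∈ Ω ∧ z.2 ∈ Ω ∧ ‖z.1 - z.2‖ < ρ}, gagF p a (u n) z) (𝓝[>] 0) (𝓝 0))
  change ∀ n, ∫⁻ z in Ω ×ˢ Ω, gagF p a (u n) z < ⊤ at hGag
  refine and_congr_right fun hconv => ⟨fun h => ?_, fun h => ?_⟩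
  · have hfin : ∫⁻ z in Ω ×ˢ Ω, gagF p a u₀ z ≠ ⊤ := by
      obtain ⟨n, hn⟩ := (h.eventually (gt_mem_nhds (zero_lt_one' ℝ≥0∞))).exists
      refine ne_top_of_le_ne_top ?_ (gag_quasi_int p a hp u₀ (u n) (fun x => u n x - u₀ x)
        (hum n) (hwm n) (fun x y => ?_) _)
      · exact ENNReal.mul_ne_top hCt (ENNReal.add_ne_top.2 ⟨(hGag n).ne, (hn.trans one_lt_top).ne⟩)
      · have : u₀ x - u₀ y = (u n x - u n y) - ((u n x - u₀ x) - (u n y - u₀ y)) := by abel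
        rw [this]
        exact norm_sub_le _ _
    have h0 := gag_near p a hp Ω hΩ u₀ hu₀ hfin
    rw [ENNReal.tendsto_nhds_zero]
    intro ε hε
    have hε2 : 0 < ε / 2 := ENNReal.half_pos hε.ne'
    have h' := ENNReal.Tendsto.const_mul h (Or.inr hCt)
    have h0' := ENNReal.Tendsto.const_mul h0 (Or.inr hCt)
    rw [mul_zero] at h' h0'
    obtain ⟨N, hN⟩ := eventually_atTop.1 (ENNReal.tendsto_nhds_zero.1 h' _ hε2)
    have hlt : ∀ᶠ ρ : ℝ in 𝓝[>] 0, ∀ n ∈ Set.Iio N,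
        ∫⁻ z in {z : EuclideanSpace ℝ (Fin m) × EuclideanSpace ℝ (Fin m) |
          z.1 ∈ Ω ∧ z.2 ∈ Ω ∧ ‖z.1 - z.2‖ < ρ}, gagF p a (u n) z ≤ ε :=
      (Set.finite_Iio N).eventually_all.2 fun n _ =>
        ENNReal.tendsto_nhds_zero.1 (gag_near p a hp Ω hΩ (u n) (hum n) (hGag n).ne) _ hε
    filter_upwards [ENNReal.tendsto_nhds_zero.1 h0' _ hε2, hlt] with ρ h1 h2
    refine iSup_le fun n => ?_
    rcases lt_or_ge n N with hn | hn
    · exact h2 n hn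
    · calc _ ≤ _ := gag_quasi_int p a hp (u n) (fun x => u n x - u₀ x) u₀ (hwm n) hu₀
            (fun x y => by
              have : u n x - u n y = ((u n x - u₀ x) - (u n y - u₀ y)) + (u₀ x - u₀ y) := by abel
              rw [this]
              exact norm_add_le _ _) _
        _ ≤ C * (∫⁻ z in Ω ×ˢ Ω, gagF p a (fun x => u n x - u₀ x) z) + _ := by
            rw [mul_add]
            gcongr
            exact hsub ρ
        _ ≤ ε / 2 + ε / 2 := add_le_add (hN n hn) h1
        _ = ε := ENNReal.add_halves ε
  · rw [ENNReal.tendsto_nhds_zero]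
    intro ε hε
    have hε2 : 0 < ε / 2 := ENNReal.half_pos hε.ne'
    have h' := ENNReal.Tendsto.const_mul (h.add h) (Or.inr hCt)
    rw [add_zero, mul_zero] at h'
    obtain ⟨ρ, h1, hρ⟩ := ((ENNReal.tendsto_nhds_zero.1 h' _ hε2).and self_mem_nhdsWithin).exists
    have hρ : 0 < ρ := hρ
    have hK : ENNReal.ofReal (2 ^ (p - 1) / ρ ^ a) * (2 * volume Ω) ≠ ⊤ :=
      ENNReal.mul_ne_top ENNReal.ofReal_ne_top (ENNReal.mul_ne_top (by simp) hvol)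
    have h2 := ENNReal.Tendsto.const_mul hconv (Or.inr hK)
    rw [mul_zero] at h2
    filter_upwards [ENNReal.tendsto_nhds_zero.1 h2 _ hε2] with n hn
    set D := {z : EuclideanSpace ℝ (Fin m) × EuclideanSpace ℝ (Fin m) |
          z.1 ∈ Ω ∧ z.2 ∈ Ω ∧ ‖z.1 - z.2‖ < ρ} with hD
    have hfat := gag_fatou p a hp Ω u hum u₀ hu₀ hconv D (hsub ρ)
    calc _ = ∫⁻ z in D ∪ (Ω ×ˢ Ω) \ D, gagF p a (fun x => u n x - u₀ x) z := by
            rw [Set.union_sdiff_cancel (hsub ρ)]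
      _ ≤ (∫⁻ z in D, gagF p a (fun x => u n x - u₀ x) z) +
          ∫⁻ z in (Ω ×ˢ Ω) \ D, gagF p a (fun x => u n x - u₀ x) z :=
            lintegral_union_le _ _ _
      _ ≤ ε / 2 + ε / 2 := by
          refine add_le_add ?_ ((gag_far p a hp ha ρ hρ Ω hΩ _ (hwm n)).trans hn)
          refine ((gag_quasi_int p a hp _ (u n) u₀ (hum n) hu₀ (fun x y => ?_) _).trans ?_).trans h1
          · have : (u n x - u₀ x) - (u n y - u₀ y) = (u n x - u n y) - (u₀ x - u₀ y) := by abel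
            rw [this]
            exact norm_sub_le _ _
          · gcongr
            exact le_iSup (fun n => ∫⁻ z in D, gagF p a (u n) z) n
      _ = ε := ENNReal.add_halves ε
end

section
/- For every integer p ≥ 1 there exists a constant C > 0 such that for every integer ν ≥ 1, every x₀ ∈ ℝ^p, all real numbers r, ρ with 0 < r ≤ ρ, every η > 0, and every continuously differentiable map u : B_r(x₀) → ℝ^ν (where B_r(x₀) ⊆ ℝ^p is the open ball) whose derivative is integrable on B_r(x₀), one has λ(B_r(x₀))^{-2} ∬_{B_r(x₀)×B_r(x₀)} ‖u(y) − u(z)‖ dy dz ≤ C ( ( ∫_{B_r(x₀)} (‖Du‖ − η/ρ)_+^p )^{1/p} + η ), where λ is Lebesgue measure on ℝ^p. -/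
open MeasureTheory Filter Topology ENNReal

lemma aux_scale_s14 (p : ℕ) (F : EuclideanSpace ℝ (Fin p) → ℝ≥0∞) (hF : Measurable F)
    (t : ℝ) (ht : 1 / 2 ≤ t) (c : EuclideanSpace ℝ (Fin p)) :
    ∫⁻ y, F (t • y + c) ≤ ENNReal.ofReal (2 ^ p) * ∫⁻ y, F y := by
  have ht0 : 0 < t := by linarith
  have h1 : ∫⁻ y, F (t • y + c) = ∫⁻ y, F (y + c) ∂(Measure.map (t • ·) volume) := by
    rw [lintegral_map (by fun_prop) (by fun_prop)]
  rw [h1, Measure.map_addHaar_smul _ ht0.ne', lintegral_smul_measure,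
    lintegral_add_right_eq_self, smul_eq_mul]
  gcongr
  rw [finrank_euclideanSpace_fin, abs_of_pos (by positivity), ← inv_pow]
  gcongr
  rw [inv_le_comm₀ ht0 (by norm_num)]
  linarith

lemma aux_double (p : ℕ) (F : EuclideanSpace ℝ (Fin p) → ℝ≥0∞) (hF : Measurable F)
    (t : ℝ) (B : Set (EuclideanSpace ℝ (Fin p))) :
    ∫⁻ q in B ×ˢ B, F (q.2 + t • (q.1 - q.2)) ≤
      ENNReal.ofReal (2 ^ p) * (∫⁻ y, F y) * volume B := by
  rw [Measure.volume_eq_prod, ← Measure.prod_restrict]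
  have hm : Measurable fun q : EuclideanSpace ℝ (Fin p) × EuclideanSpace ℝ (Fin p) =>
    F (q.2 + t • (q.1 - q.2)) := by fun_prop
  rcases le_total (1 / 2) t with ht | ht
  · rw [lintegral_prod_symm' _ hm]
    calc _ ≤ ∫⁻ z in B, ENNReal.ofReal (2 ^ p) * (∫⁻ y, F y) := by
          refine lintegral_mono fun z => ?_
          refine (setLIntegral_le_lintegral _ _).trans ?_
          refine le_trans (le_of_eq ?_) (aux_scale_s14 p F hF t ht ((1 - t) • z))
          refine lintegral_congr fun y => ?_
          congr 1
          module
      _ = _ := by simp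
  · rw [lintegral_prod _ hm.aemeasurable]
    calc _ ≤ ∫⁻ z in B, ENNReal.ofReal (2 ^ p) * (∫⁻ y, F y) := by
          refine lintegral_mono fun y => ?_
          refine (setLIntegral_le_lintegral _ _).trans ?_
          refine le_trans (le_of_eq ?_) (aux_scale_s14 p F hF (1 - t) (by linarith) (t • y))
          refine lintegral_congr fun z => ?_
          congr 1
          module
      _ = _ := by simp

lemma aux_ftc {p ν : ℕ} (x₀ : EuclideanSpace ℝ (Fin p)) (r : ℝ)
    (u : EuclideanSpace ℝ (Fin p) → EuclideanSpace ℝ (Fin ν))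
    (hu : ContDiffOn ℝ 1 u (Metric.ball x₀ r)) (y z : EuclideanSpace ℝ (Fin p))
    (hy : y ∈ Metric.ball x₀ r) (hz : z ∈ Metric.ball x₀ r) :
    ENNReal.ofReal ‖u y - u z‖ ≤ ∫⁻ t in Set.Icc (0:ℝ) 1,
      ENNReal.ofReal (‖fderivWithin ℝ u (Metric.ball x₀ r) (z + t • (y - z))‖ * (2 * r)) := by
  have hmem : ∀ t ∈ Set.Icc (0:ℝ) 1, z + t • (y - z) ∈ Metric.ball x₀ r := fun t ht =>
    (convex_ball x₀ r).add_smul_sub_mem hz hy ht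
  have hc : ContDiffOn ℝ 1 (fun t : ℝ => u (z + t • (y - z))) (Set.Icc 0 1) :=
    hu.comp (by fun_prop) hmem
  have h := enorm_sub_le_lintegral_deriv_of_contDiffOn_Icc hc zero_le_one
  simp only [one_smul, zero_smul, add_zero, add_sub_cancel] at h
  rw [ofReal_norm]
  refine h.trans (setLIntegral_mono' measurableSet_Icc fun t ht => ?_)
  rw [← ofReal_norm]
  apply ENNReal.ofReal_le_ofReal
  have hd : HasFDerivAt u (fderivWithin ℝ u (Metric.ball x₀ r) (z + t • (y - z)))
      (z + t • (y - z)) :=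
    ((hu.differentiableOn one_ne_zero _ (hmem t ht)).hasFDerivWithinAt).hasFDerivAt
      (Metric.isOpen_ball.mem_nhds (hmem t ht))
  have hg : HasDerivAt (fun t : ℝ => z + t • (y - z)) (y - z) t := by
    simpa using ((hasDerivAt_id t).smul_const (y - z)).const_add z
  have := hd.comp_hasDerivAt t hg
  change HasDerivAt (fun t : ℝ => u (z + t • (y - z))) _ t at this
  rw [this.deriv]
  refine (ContinuousLinearMap.le_opNorm _ _).trans ?_
  gcongr
  rw [← dist_eq_norm]
  have := dist_triangle_right y z x₀
  rw [Metric.mem_ball] at hy hz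
  linarith

lemma aux_holder {α : Type*} [MeasurableSpace α] (μ : Measure α) (p : ℕ) (hp : 1 ≤ p)
    (f : α → ℝ) (hf0 : ∀ x, 0 ≤ f x) (hf : AEStronglyMeasurable f μ) :
    ∫⁻ x, ENNReal.ofReal (f x) ∂μ ≤
      (∫⁻ x, ENNReal.ofReal (f x ^ p) ∂μ) ^ (1 / (p:ℝ)) * μ Set.univ ^ (1 - 1 / (p:ℝ)) := by
  have h := eLpNorm_le_eLpNorm_mul_rpow_measure_univ (p := 1) (q := (p : ℝ≥0∞)) (μ := μ)
    (by exact_mod_cast hp) hf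
  rw [eLpNorm_one_eq_lintegral_enorm,
    eLpNorm_eq_lintegral_rpow_enorm_toReal (by exact_mod_cast (by omega)) (by simp)] at h
  simp only [ENNReal.toReal_natCast, ENNReal.toReal_one, div_one,
    Real.enorm_of_nonneg (hf0 _), ENNReal.rpow_natCast] at h
  simpa only [ENNReal.ofReal_pow (hf0 _)] using h

theorem truncated_poincare_mean_oscillation (p : ℕ) (hp : 1 ≤ p) :
    ∃ C : ℝ, 0 < C ∧ ∀ (ν : ℕ), 1 ≤ ν →
      ∀ (x₀ : EuclideanSpace ℝ (Fin p)) (r ρ : ℝ), 0 < r → r ≤ ρ →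
      ∀ (η : ℝ), 0 < η →
      ∀ (u : EuclideanSpace ℝ (Fin p) → EuclideanSpace ℝ (Fin ν)),
        ContDiffOn ℝ 1 u (Metric.ball x₀ r) →
        IntegrableOn (fun x => fderivWithin ℝ u (Metric.ball x₀ r) x)
          (Metric.ball x₀ r) →
        (volume (Metric.ball x₀ r) ^ 2)⁻¹ *
            (∫⁻ z in (Metric.ball x₀ r) ×ˢ (Metric.ball x₀ r),
              ENNReal.ofReal ‖u z.1 - u z.2‖)
          ≤ ENNReal.ofReal C *
            ((∫⁻ x in Metric.ball x₀ r,
                ENNReal.ofReal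
                  ((max (‖fderivWithin ℝ u (Metric.ball x₀ r) x‖ - η / ρ) 0) ^ p))
                ^ (1 / (p : ℝ))
              + ENNReal.ofReal η) := by
  set W : ℝ≥0∞ := volume (Metric.ball (0 : EuclideanSpace ℝ (Fin p)) 1) with hW
  have hW0 : W ≠ 0 := (Metric.measure_ball_pos _ _ one_pos).ne'
  have hWt : W ≠ ∞ := measure_ball_lt_top.ne
  have hp0 : (0:ℝ) < p := by exact_mod_cast hp
  set k : ℝ := (W ^ (-(1 / (p:ℝ)))).toReal with hk
  have hkW : ENNReal.ofReal k = W ^ (-(1 / (p:ℝ))) :=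
    ENNReal.ofReal_toReal (ENNReal.rpow_ne_top_of_ne_zero hW0 hWt)
  have hk0 : 0 ≤ k := ENNReal.toReal_nonneg
  refine ⟨2 * 2 ^ p * k + 2, by positivity, ?_⟩
  intro ν _ x₀ r ρ hr hrρ η hη u hu _
  have hρ : 0 < ρ := hr.trans_le hrρ
  set B := Metric.ball x₀ r with hB
  set V := volume B with hV
  have hV0 : V ≠ 0 := (Metric.measure_ball_pos _ _ hr).ne'
  have hVt : V ≠ ∞ := measure_ball_lt_top.ne
  have hVW : V = ENNReal.ofReal (r ^ p) * W := by
    rw [hV, hB, Measure.addHaar_ball_of_pos _ _ hr, finrank_euclideanSpace_fin]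
  set f : EuclideanSpace ℝ (Fin p) → ℝ := fun x => max (‖fderivWithin ℝ u B x‖ - η / ρ) 0 with hf
  have hf0 : ∀ x, 0 ≤ f x := fun x => le_max_right _ _
  have hBm : MeasurableSet B := measurableSet_ball
  have hfc : ContinuousOn f B :=
    (continuous_id.max continuous_const).comp_continuousOn
      ((hu.continuousOn_fderivWithin Metric.isOpen_ball.uniqueDiffOn le_rfl).norm.sub
        continuousOn_const)
  set F : EuclideanSpace ℝ (Fin p) → ℝ≥0∞ := B.indicator fun x => ENNReal.ofReal (f x) with hF
  have hFm : Measurable F := by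
    classical
    have : ContinuousOn (fun x => ENNReal.ofReal (f x)) B :=
      ENNReal.continuous_ofReal.comp_continuousOn hfc
    have h2 := this.measurable_piecewise (g := 0) continuousOn_const hBm
    rwa [Set.piecewise_eq_indicator] at h2
  have hFint : ∫⁻ x, F x = ∫⁻ x in B, ENNReal.ofReal (f x) := lintegral_indicator hBm _
  set I := ∫⁻ x in B, ENNReal.ofReal (f x ^ p) with hI
  have hJ : ∫⁻ x, F x ≤ I ^ (1 / (p:ℝ)) * V ^ (1 - 1 / (p:ℝ)) := by
    rw [hFint]
    simpa using aux_holder (volume.restrict B) p hp f hf0 (hfc.aestronglyMeasurable hBm)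
  have hpt : ∀ q ∈ B ×ˢ B, ENNReal.ofReal ‖u q.1 - u q.2‖ ≤
      ENNReal.ofReal (2 * r) * (∫⁻ t in Set.Icc (0:ℝ) 1, F (q.2 + t • (q.1 - q.2)))
        + ENNReal.ofReal (2 * η) := by
    rintro ⟨y, z⟩ ⟨hy, hz⟩
    refine (aux_ftc x₀ r u hu y z hy hz).trans ?_
    calc _ ≤ ∫⁻ t in Set.Icc (0:ℝ) 1, (ENNReal.ofReal (2 * r) * F (z + t • (y - z))
              + ENNReal.ofReal (2 * η)) := by
          refine setLIntegral_mono' measurableSet_Icc fun t ht => ?_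
          have hm : z + t • (y - z) ∈ B := (convex_ball x₀ r).add_smul_sub_mem hz hy ht
          rw [hF, Set.indicator_of_mem hm, ← ENNReal.ofReal_mul (by positivity),
            ← ENNReal.ofReal_add (mul_nonneg (by positivity) (hf0 _)) (by positivity)]
          apply ENNReal.ofReal_le_ofReal
          have h1 : ‖fderivWithin ℝ u B (z + t • (y - z))‖ ≤ f (z + t • (y - z)) + η / ρ := by
            have := le_max_left (‖fderivWithin ℝ u B (z + t • (y - z))‖ - η / ρ) 0
            simp only [hf]; linarith
          have h2 : η / ρ * r ≤ η := by
            rw [div_mul_eq_mul_div, div_le_iff₀ hρ]; gcongr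
          nlinarith [mul_le_mul_of_nonneg_right h1 hr.le]
      _ = _ := by
          rw [lintegral_add_right _ measurable_const, lintegral_const_mul _ (by fun_prop)]
          simp
  have hmain : ∫⁻ q in B ×ˢ B, ENNReal.ofReal ‖u q.1 - u q.2‖ ≤
      ENNReal.ofReal (2 * r) * (ENNReal.ofReal (2 ^ p) * (∫⁻ x, F x) * V)
        + ENNReal.ofReal (2 * η) * V ^ 2 := by
    refine (setLIntegral_mono' (hBm.prod hBm) hpt).trans ?_
    rw [lintegral_add_right _ measurable_const]
    gcongr
    · have hm2 : Measurable (Function.uncurry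
          fun (q : EuclideanSpace ℝ (Fin p) × EuclideanSpace ℝ (Fin p)) (t : ℝ) =>
            F (q.2 + t • (q.1 - q.2))) := by
        unfold Function.uncurry; fun_prop
      rw [lintegral_const_mul _ hm2.lintegral_prod_right, lintegral_lintegral_swap hm2.aemeasurable]
      gcongr
      calc _ ≤ ∫⁻ t in Set.Icc (0:ℝ) 1, ENNReal.ofReal (2 ^ p) * (∫⁻ x, F x) * V :=
            lintegral_mono fun t => aux_double p F hFm t B
        _ = _ := by simp
    · rw [setLIntegral_const, Measure.volume_eq_prod, Measure.prod_prod, sq]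
  have hrV : ENNReal.ofReal r * V ^ (1 - 1 / (p:ℝ)) = ENNReal.ofReal k * V := by
    have h1 : V ^ (1 / (p:ℝ)) = ENNReal.ofReal r * W ^ (1 / (p:ℝ)) := by
      rw [hVW, ENNReal.mul_rpow_of_nonneg _ _ (by positivity), ENNReal.ofReal_pow hr.le,
        ← ENNReal.rpow_natCast, ← ENNReal.rpow_mul, mul_one_div_cancel hp0.ne', ENNReal.rpow_one]
    have h2 : V = V ^ (1 / (p:ℝ)) * V ^ (1 - 1 / (p:ℝ)) := by
      rw [← ENNReal.rpow_add _ _ hV0 hVt]; simp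
    have h3 : W ^ (-(1 / (p:ℝ))) * W ^ (1 / (p:ℝ)) = 1 := by
      rw [← ENNReal.rpow_add _ _ hW0 hWt]; simp
    calc _ = (W ^ (-(1 / (p:ℝ))) * W ^ (1 / (p:ℝ))) * (ENNReal.ofReal r * V ^ (1 - 1 / (p:ℝ))) := by
          rw [h3, one_mul]
      _ = W ^ (-(1 / (p:ℝ))) * (V ^ (1 / (p:ℝ)) * V ^ (1 - 1 / (p:ℝ))) := by rw [h1]; ring
      _ = _ := by rw [← h2, hkW]
  have hfin : ∫⁻ q in B ×ˢ B, ENNReal.ofReal ‖u q.1 - u q.2‖ ≤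
      V ^ 2 * (ENNReal.ofReal (2 * 2 ^ p * k + 2) * (I ^ (1 / (p:ℝ)) + ENNReal.ofReal η)) := by
    refine hmain.trans ?_
    calc _ ≤ ENNReal.ofReal (2 * r) * (ENNReal.ofReal (2 ^ p) *
              (I ^ (1 / (p:ℝ)) * V ^ (1 - 1 / (p:ℝ))) * V)
              + ENNReal.ofReal (2 * η) * V ^ 2 := by gcongr
      _ = V * ENNReal.ofReal 2 * ENNReal.ofReal (2 ^ p) * I ^ (1 / (p:ℝ)) *
            (ENNReal.ofReal r * V ^ (1 - 1 / (p:ℝ))) + V ^ 2 * (ENNReal.ofReal 2 * ENNReal.ofReal η) := by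
          rw [ENNReal.ofReal_mul zero_le_two, ENNReal.ofReal_mul zero_le_two]; ring
      _ = V ^ 2 * (ENNReal.ofReal (2 * 2 ^ p * k) * I ^ (1 / (p:ℝ)) +
            ENNReal.ofReal 2 * ENNReal.ofReal η) := by
          rw [hrV, ENNReal.ofReal_mul (by positivity), ENNReal.ofReal_mul zero_le_two]; ring
      _ ≤ _ := by
          rw [mul_add (ENNReal.ofReal (2 * 2 ^ p * k + 2))]
          gcongr
          · linarith
          · have : 0 ≤ 2 * 2 ^ p * k := by positivity
            linarith
  rw [mul_comm, ← div_eq_mul_inv]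
  exact ENNReal.div_le_of_le_mul' hfin
end
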